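/- Let n ≥ 2, set G := g_{σ_n}g_{σ_{n−1}}⋯g_{σ_1}g_{a_{n+1}} ∈ TLhat_{n+1}(q), and let τ, τ' be traces on TLhat_{n+1}(q). If τ(m) = τ'(m) for every Markov element m of TLhat_{n+1}(q) and τ(G^k) = τ'(G^k) for every integer k ≥ 1, then τ = τ'. -/

import Mathlib

namespace AffineTL

open FreeAlgebra

/-- Cyclic successor on `Fin m`. -/
def csucc {m : ℕ} (i : Fin m) : Fin m := ⟨(i.val + 1) % m, Nat.mod_lt _ i.pos⟩

/-- The defining relations of the affine Temperley–Lieb algebra `TLhat_m(q)` with `m`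
generators (indexed so that `g_{σ_i}` has index `i - 1` and `g_{a_m}` has index `m - 1`).
For `m = 1` the unique generator is set to `0`, so that `TLhat_1(q) ≅ K`. -/
inductive ATLRel {K : Type*} [CommRing K] (q : K) (m : ℕ) :
    FreeAlgebra K (Fin m) → FreeAlgebra K (Fin m) → Prop
  | degen (h : m ≤ 1) (i : Fin m) : ATLRel q m (ι K i) 0
  | quad (h : 2 ≤ m) (i : Fin m) :
      ATLRel q m (ι K i * ι K i) ((q - 1) • ι K i + algebraMap K _ q)
  | comm (h : 3 ≤ m) (i j : Fin m) (h1 : i ≠ j) (h2 : j ≠ csucc i) (h3 : i ≠ csucc j) :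
      ATLRel q m (ι K i * ι K j) (ι K j * ι K i)
  | braid (h : 3 ≤ m) (i : Fin m) :
      ATLRel q m (ι K i * ι K (csucc i) * ι K i) (ι K (csucc i) * ι K i * ι K (csucc i))
  | vrel (h : 3 ≤ m) (i : Fin m) :
      ATLRel q m (ι K i * ι K (csucc i) * ι K i + ι K i * ι K (csucc i) + ι K (csucc i) * ι K i
        + ι K i + ι K (csucc i) + 1) 0

/-- The affine Temperley–Lieb algebra `TLhat_m(q)` of type `Ã`. -/
abbrev ATL (K : Type*) [CommRing K] (q : K) (m : ℕ) : Type _ := RingQuot (ATLRel q m)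

/-- The generators of `TLhat_m(q)`. -/
noncomputable def g {K : Type*} [CommRing K] (q : K) (m : ℕ) (i : Fin m) : ATL K q m :=
  RingQuot.mkAlgHom K (ATLRel q m) (ι K i)

/-- The defining relations of the type `A` Temperley–Lieb algebra `TL_n(q)` with `n`
generators (`g_{σ_i}` has index `i - 1`). -/
inductive TLARel {K : Type*} [CommRing K] (q : K) (n : ℕ) :
    FreeAlgebra K (Fin n) → FreeAlgebra K (Fin n) → Prop
  | quad (i : Fin n) :
      TLARel q n (ι K i * ι K i) ((q - 1) • ι K i + algebraMap K _ q)
  | comm (i j : Fin n) (h : i.val + 2 ≤ j.val ∨ j.val + 2 ≤ i.val) :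
      TLARel q n (ι K i * ι K j) (ι K j * ι K i)
  | braid (i j : Fin n) (h : j.val = i.val + 1) :
      TLARel q n (ι K i * ι K j * ι K i) (ι K j * ι K i * ι K j)
  | vrel (i j : Fin n) (h : j.val = i.val + 1) :
      TLARel q n (ι K i * ι K j * ι K i + ι K i * ι K j + ι K j * ι K i
        + ι K i + ι K j + 1) 0

/-- The type `A` Temperley–Lieb algebra `TL_n(q)`. -/
abbrev TLA (K : Type*) [CommRing K] (q : K) (n : ℕ) : Type _ := RingQuot (TLARel q n)

/-- The generators of `TL_n(q)`. -/
noncomputable def gA {K : Type*} [CommRing K] (q : K) (n : ℕ) (i : Fin n) : TLA K q n :=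
  RingQuot.mkAlgHom K (TLARel q n) (ι K i)

/-- The formal inverse `q⁻¹·(x − (q−1))` of an element satisfying `x² = (q−1)x + q`. -/
noncomputable def qinv {K : Type*} [CommRing K] (q : K) {A : Type*} [Ring A] [Algebra K A]
    (x : A) : A :=
  Ring.inverse q • (x - algebraMap K A (q - 1))

/-- A trace on a `K`-algebra: a `K`-linear form vanishing on commutators. -/
def IsTrace {K : Type*} [CommRing K] {A : Type*} [Ring A] [Algebra K A]
    (τ : A →ₗ[K] K) : Prop :=
  ∀ x y : A, τ (x * y) = τ (y * x)

/-- The element `G = g_{σ_n}⋯g_{σ_1}·g_{a_{n+1}}` of `TLhat_{n+1}(q)`. -/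
noncomputable def bigG {K : Type*} [CommRing K] (q : K) (n : ℕ) : ATL K q (n + 1) :=
  (List.ofFn fun j : Fin n => g q (n + 1) ⟨n - 1 - j.val, by omega⟩).prod *
    g q (n + 1) (Fin.last n)

/-- The inverse `G⁻¹ = g_{a_{n+1}}⁻¹·g_{σ_1}⁻¹⋯g_{σ_n}⁻¹` of `bigG`. -/
noncomputable def bigGinv {K : Type*} [CommRing K] (q : K) (n : ℕ) : ATL K q (n + 1) :=
  qinv q (g q (n + 1) (Fin.last n)) *
    (List.ofFn fun j : Fin n => qinv q (g q (n + 1) j.castSucc)).prod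

end AffineTL

namespace AffineTL

/-- `F` is the canonical homomorphism `F_m : TLhat_m(q) → TLhat_{m+1}(q)`:
`t_{σ_i} ↦ g_{σ_i}` for `1 ≤ i ≤ m−1` and `t_{a_m} ↦ g_{σ_m}·g_{a_{m+1}}·g_{σ_m}⁻¹`. -/
def isF {K : Type*} [CommRing K] (q : K) (m : ℕ) (hm : 2 ≤ m)
    (F : ATL K q m →ₐ[K] ATL K q (m + 1)) : Prop :=
  (∀ i : ℕ, ∀ hi : i < m - 1,
      F (g q m ⟨i, by omega⟩) = g q (m + 1) ⟨i, by omega⟩) ∧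
  F (g q m ⟨m - 1, by omega⟩) =
    g q (m + 1) ⟨m - 1, by omega⟩ * g q (m + 1) ⟨m, by omega⟩ *
      qinv q (g q (m + 1) ⟨m - 1, by omega⟩)

end AffineTL

namespace AffineTL

/-- A Markov element of `TLhat_{n+1}(q)`: an element of the form `A·g_{σ_n}^ε·B` with
`A, B` in the image of `F_n` and `ε ∈ {0, 1}`. -/
def IsMarkov {K : Type*} [CommRing K] {q : K} (n : ℕ) (hn : 1 ≤ n)
    (F : ATL K q n →ₐ[K] ATL K q (n + 1)) (x : ATL K q (n + 1)) : Prop :=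
  ∃ a b : ATL K q (n + 1), a ∈ F.range ∧ b ∈ F.range ∧
    (x = a * b ∨ x = a * g q (n + 1) ⟨n - 1, by omega⟩ * b)

end AffineTL

/-!
In terms of `e = 1 + g` the relations become `e i * e i = (q + 1) • e i`,
`e i * e (i ± 1) * e i = q • e i` and commutation of non-neighbours on a cycle, so words may be
shortened. By induction on length, the difference `D` of the two traces vanishes on all words in the
`e i`: rotating a word does not change the value of `D`, so one may assume that consecutive
occurrences of a letter, read around the circle, are separated by both neighbours of that letter.

If some letter occurs at most once, then all do. Such a word is cyclically `e n * e 0 * x` or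
`e 0 * e n * x` or simpler, where `x` avoids `0` and `n`, and vanishes because of the element
`E = 1 + g_{σ_n} g_{a_{n+1}} g_{σ_n}⁻¹ = e n + e 0 - e n * e 0 - q⁻¹ e 0 * e n` in the image of
`F_n`.

Otherwise neighbouring letters alternate, so that all letters occur equally often, say `k` times,
and the word is the `k`-th power of a word `c` containing each letter once. Modulo shorter words
`D (c ^ k)` is zero or nonzero independently of `c`: moving to another cyclic order amounts to
exchanging `e n * e 0` and `e 0 * e n`, and `(E * y) ^ k` is, up to sign and shorter words, a
combination of `(e n * e 0 * y) ^ k` and `(e 0 * e n * y) ^ k`. For `c = e n * ⋯ * e 1 * e 0` the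
difference of `c ^ k` and `G ^ k` is a combination of shorter words.
-/

namespace AffineTL

section Lists

theorem exists_eq_flatten_replicate_of_isChain_ne {α : Type*} {x y : α} (l : List α)
    (hl : ∀ z ∈ l, z = x ∨ z = y) (hchain : (x :: l).IsChain (· ≠ ·)) (hne : l ≠ [])
    (hlast : ∀ r, l ≠ r ++ [x]) : ∃ k, x :: l = (List.replicate (k + 1) [x, y]).flatten := by
  match l with
  | [] => exact absurd rfl hne
  | z :: l =>
    rw [List.isChain_cons_cons] at hchain
    obtain rfl : z = y := (hl z List.mem_cons_self).resolve_left hchain.1.symm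
    match l with
    | [] => exact ⟨0, rfl⟩
    | z' :: l =>
      have hchain' := List.isChain_cons_cons.1 hchain.2
      obtain rfl : z' = x := (hl z' (by simp)).resolve_right hchain'.1.symm
      obtain ⟨k, hk⟩ := exists_eq_flatten_replicate_of_isChain_ne l
        (fun w hw => hl w (by simp [hw])) hchain'.2
        (fun h => hlast [z] (by simp [h])) (fun r h => hlast (z :: z' :: r) (by simp [h]))
      exact ⟨k + 1, by rw [hk, List.replicate_succ (n := k + 1)]; rfl⟩

variable {α : Type*} [DecidableEq α]

theorem filter_dedup (p : α → Bool) (l : List α) : (l.filter p).dedup = l.dedup.filter p := by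
  induction l with
  | nil => rfl
  | cons a l ih =>
    by_cases hp : p a <;> by_cases ha : a ∈ l <;>
      simp [hp, ha, List.dedup_cons_of_mem, List.dedup_cons_of_notMem, ih]

theorem dedup_flatten_replicate {l : List α} (hl : l.Nodup) (k : ℕ) :
    (List.replicate (k + 1) l).flatten.dedup = l := by
  induction k with
  | zero => simpa using hl.dedup
  | succ k ih =>
    rw [List.replicate_succ, List.flatten_cons, List.Subset.dedup_append_right, ih]
    exact fun x hx => by simpa using hx

theorem exists_isRotated_cons_of_count_le_one {i : α} {w : List α} (hi : i ∈ w)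
    (hcount : w.count i ≤ 1) : ∃ x, w ~r i :: x ∧ i ∉ x := by
  obtain ⟨a, b, rfl⟩ := List.append_of_mem hi
  refine ⟨b ++ a, List.isRotated_append, fun hx => ?_⟩
  have := List.count_pos_iff.2 hx
  simp only [List.count_append, List.count_cons_self] at this hcount
  omega

theorem commute_prod_map {ι M : Type*} [Monoid M] {f : ι → M} {x : M} {l : List ι}
    (h : ∀ i ∈ l, Commute x (f i)) : Commute x (l.map f).prod :=
  Commute.list_prod_right _ _ fun y hy => by
    obtain ⟨i, hi, rfl⟩ := List.mem_map.1 hy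
    exact h i hi

/-- The projection lemma of Mazurkiewicz trace theory. -/
theorem prod_map_eq_of_filter_eq {M : Type*} [Monoid M] (f : α → M) {l l' : List α}
    (h : ∀ a b, a = b ∨ ¬Commute (f a) (f b) →
      l.filter (fun x => x = a ∨ x = b) = l'.filter (fun x => x = a ∨ x = b)) :
    (l.map f).prod = (l'.map f).prod := by
  induction l generalizing l' with
  | nil =>
    have hl' : l' = [] := List.eq_nil_iff_forall_not_mem.2 fun a ha => by
      have := List.filter_eq_nil_iff.1 (h a a (.inl rfl)).symm a ha
      simp at this
    rw [hl']
  | cons x l ih =>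
    have hx : x ∈ l' := by
      have hxx : x ∈ (x :: l).filter (fun y => y = x ∨ y = x) := by simp
      rw [h x x (.inl rfl)] at hxx
      exact List.mem_of_mem_filter hxx
    obtain ⟨s, t, rfl, hs⟩ := List.eq_append_cons_of_mem hx
    have filter_s : ∀ a b, a = b ∨ ¬Commute (f a) (f b) → x = a ∨ x = b →
        s.filter (fun y => y = a ∨ y = b) = [] := fun a b hab hxab => by
      rcases hz : s.filter (fun y => y = a ∨ y = b) with _ | ⟨z, r⟩
      · rfl
      · have := h a b hab
        rw [List.filter_append, hz, List.filter_cons_of_pos (by simpa using hxab)] at this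
        have hzs : z ∈ s := List.mem_of_mem_filter (hz ▸ List.mem_cons_self)
        exact absurd ((List.cons.inj this).1 ▸ hzs) hs
    have hcomm : Commute (f x) (s.map f).prod := commute_prod_map fun y hy => by
      by_contra hxy
      have := List.filter_eq_nil_iff.1 (filter_s x y (.inr hxy) (.inl rfl)) y hy
      simp at this
    have hl : (l.map f).prod = ((s ++ t).map f).prod := ih fun a b hab => by
      have := h a b hab
      by_cases hxab : x = a ∨ x = b
      · simpa [hxab, filter_s a b hab hxab, -Bool.decide_or] using this
      · simpa [hxab] using this
    simp only [List.map_cons, List.map_append, List.prod_cons, List.prod_append, hl]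
    rw [← mul_assoc, hcomm.eq, mul_assoc]

/-- By `hchain` and `hends`, the two letters alternate in `v` read around a circle. -/
theorem eq_flatten_replicate_dedup_of_isChain_ne {i j : α} (hij : i ≠ j) {v : List α}
    (hv : ∀ z ∈ v, z = i ∨ z = j) (hchain : v.IsChain (· ≠ ·))
    (hends : ∀ z r, v ≠ z :: (r ++ [z])) (hcount : 2 ≤ v.count i) :
    v = (List.replicate (v.count i) v.dedup).flatten ∧ v.count j = v.count i := by
  obtain ⟨x, l, rfl⟩ : ∃ x l, v = x :: l :=
    List.exists_cons_of_ne_nil fun h => by simp [h] at hcount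
  have hne : l ≠ [] := fun h => by
    have := (List.count_le_length (a := i) (l := x :: l)).trans' hcount
    simp [h] at this
  have main : ∀ y, y ≠ x → (∀ z ∈ l, z = x ∨ z = y) → ∃ k,
      x :: l = (List.replicate k (x :: l).dedup).flatten ∧
      (x :: l).count x = k ∧ (x :: l).count y = k := fun y hyx hl => by
    obtain ⟨k, hk⟩ := exists_eq_flatten_replicate_of_isChain_ne l hl hchain hne
      fun r h => hends x r (by rw [h])
    have hdedup : (x :: l).dedup = [x, y] := by
      rw [hk, dedup_flatten_replicate (by simpa using hyx.symm)]
    refine ⟨k + 1, by rw [hdedup, hk], ?_, ?_⟩ <;> rw [hk] <;>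
      simp [List.count_flatten, hyx, hyx.symm]
  have hl : ∀ z ∈ l, z = i ∨ z = j := fun z hz => hv z (List.mem_cons_of_mem x hz)
  rcases hv x List.mem_cons_self with rfl | rfl
  · obtain ⟨k, hk, hkx, hky⟩ := main j hij.symm hl
    exact ⟨by rw [hkx]; exact hk, by rw [hkx, hky]⟩
  · obtain ⟨k, hk, hkx, hky⟩ := main i hij fun z hz => (hl z hz).symm
    exact ⟨by rw [hky]; exact hk, by rw [hkx, hky]⟩

end Lists

section WordSpan

variable {K ι A : Type*} [CommRing K] [Ring A] [Algebra K A]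

/-- The span of the words of length less than `m` in the elements `e i`. -/
def wordSpan (K : Type*) [CommRing K] [Algebra K A] (e : ι → A) (m : ℕ) : Submodule K A :=
  Submodule.span K {x | ∃ l : List ι, l.length < m ∧ (l.map e).prod = x}

variable {e : ι → A} {x y : A} {a b m : ℕ}

theorem prod_mem_wordSpan {l : List ι} (hl : l.length < m) : (l.map e).prod ∈ wordSpan K e m :=
  Submodule.subset_span ⟨l, hl, rfl⟩

theorem wordSpan_mono : Monotone (wordSpan K e) := fun _ _ h =>
  Submodule.span_mono fun _ ⟨l, hl, hx⟩ => ⟨l, hl.trans_le h, hx⟩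

theorem mul_mem_wordSpan (hx : x ∈ wordSpan K e a) (hy : y ∈ wordSpan K e b)
    (hm : a + b ≤ m + 1) : x * y ∈ wordSpan K e m := by
  have hxy := Submodule.mul_mem_mul hx hy
  rw [wordSpan, wordSpan, Submodule.span_mul_span] at hxy
  refine Submodule.span_mono ?_ hxy
  rintro _ ⟨_, ⟨l, hl, rfl⟩, _, ⟨l', hl', rfl⟩, rfl⟩
  exact ⟨l ++ l', by rw [List.length_append]; omega, by simp⟩

theorem pow_mem_wordSpan (hx : x ∈ wordSpan K e (m + 1)) (k : ℕ) :
    x ^ k ∈ wordSpan K e (k * m + 1) := by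
  induction k with
  | zero => simpa using prod_mem_wordSpan (K := K) (e := e) (l := []) (m := 0 * m + 1) (by simp)
  | succ k ih => exact pow_succ x k ▸ mul_mem_wordSpan ih hx (by rw [add_mul]; omega)

theorem pow_sub_pow_mem_wordSpan (hx : x ∈ wordSpan K e (m + 1)) (hxy : x - y ∈ wordSpan K e m)
    (k : ℕ) : x ^ k - y ^ k ∈ wordSpan K e (k * m) := by
  have hy : y ∈ wordSpan K e (m + 1) := by
    simpa using sub_mem hx (wordSpan_mono m.le_succ hxy)
  induction k with
  | zero => simp
  | succ k ih =>
    have hsplit : x ^ (k + 1) - y ^ (k + 1) = (x ^ k - y ^ k) * x + y ^ k * (x - y) := by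
      rw [pow_succ, pow_succ]; noncomm_ring
    rw [hsplit]
    exact add_mem (mul_mem_wordSpan ih hx (by rw [add_mul]; omega))
      (mul_mem_wordSpan (pow_mem_wordSpan hy k) hxy (by rw [add_mul]; omega))

theorem add_pow_sub_mem_wordSpan (hx : x ∈ wordSpan K e (m + 1)) (hy : y ∈ wordSpan K e (m + 1))
    (hxy : x * y ∈ wordSpan K e (2 * m)) (hyx : y * x ∈ wordSpan K e (2 * m)) (k : ℕ) :
    (x + y) ^ (k + 1) - (x ^ (k + 1) + y ^ (k + 1)) ∈ wordSpan K e ((k + 1) * m) := by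
  induction k with
  | zero => simp
  | succ k ih =>
    have hsplit : (x + y) ^ (k + 2) - (x ^ (k + 2) + y ^ (k + 2)) =
        ((x + y) ^ (k + 1) - (x ^ (k + 1) + y ^ (k + 1))) * (x + y) +
          (x ^ k * (x * y) + y ^ k * (y * x)) := by
      simp only [pow_succ]; noncomm_ring
    rw [hsplit]
    refine add_mem (mul_mem_wordSpan ih (add_mem hx hy) ?_)
      (add_mem (mul_mem_wordSpan (pow_mem_wordSpan hx k) hxy ?_)
        (mul_mem_wordSpan (pow_mem_wordSpan hy k) hyx ?_)) <;>
    · ring_nf; omega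

theorem prod_map_sub_one_sub_mem_wordSpan (l : List ι) :
    (l.map fun i => e i - 1).prod - (l.map e).prod ∈ wordSpan K e l.length := by
  induction l with
  | nil => simp
  | cons i l ih =>
    have hi : e i - 1 ∈ wordSpan K e 2 :=
      sub_mem (by simpa using prod_mem_wordSpan (K := K) (e := e) (l := [i]) (m := 2) (by simp))
        (by simpa using prod_mem_wordSpan (K := K) (e := e) (l := []) (m := 2) (by simp))
    have hsplit : ((i :: l).map fun i => e i - 1).prod - ((i :: l).map e).prod =
        (e i - 1) * ((l.map fun i => e i - 1).prod - (l.map e).prod) - (l.map e).prod := by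
      simp only [List.map_cons, List.prod_cons]; noncomm_ring
    rw [hsplit, List.length_cons]
    exact sub_mem (mul_mem_wordSpan hi ih (by omega)) (prod_mem_wordSpan l.length.lt_succ_self)

/-- A word is reducible if its value is a combination of values of strictly shorter words. -/
def IsReducible (K : Type*) [CommRing K] [Algebra K A] (e : ι → A) (l : List ι) : Prop :=
  (l.map e).prod ∈ wordSpan K e l.length

theorem IsReducible.of_infix {l l' : List ι} (h : IsReducible K e l) (hl : l <:+: l') :
    IsReducible K e l' := by
  obtain ⟨s, t, rfl⟩ := hl
  have hs : (s.map e).prod ∈ wordSpan K e (s.length + 1) := prod_mem_wordSpan s.length.lt_succ_self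
  have ht : (t.map e).prod ∈ wordSpan K e (t.length + 1) := prod_mem_wordSpan t.length.lt_succ_self
  rw [IsReducible, List.map_append, List.map_append, List.prod_append, List.prod_append,
    List.length_append, List.length_append]
  exact mul_mem_wordSpan (mul_mem_wordSpan hs h (m := s.length + l.length) (by omega)) ht (by omega)

end WordSpan

section CyclicTL

variable {K ι A : Type*} [CommRing K] [Ring A] [Algebra K A]

/-- The Temperley–Lieb relations for elements `e i` indexed by a set on which the permutation `s`
plays the role of the successor on a cycle: `i` is joined to `s i` and to `s.symm i`. -/
structure IsCyclicTL (q : K) (s : Equiv.Perm ι) (e : ι → A) : Prop where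
  mul_self (i : ι) : e i * e i = (q + 1) • e i
  mul_succ_mul (i : ι) : e i * e (s i) * e i = q • e i
  succ_mul_mul (i : ι) : e (s i) * e i * e (s i) = q • e (s i)
  commute {i j : ι} (hij : j ≠ s i) (hji : i ≠ s j) : Commute (e i) (e j)

namespace IsCyclicTL

variable {q : K} {s : Equiv.Perm ι} {e : ι → A}

theorem symm (h : IsCyclicTL q s e) : IsCyclicTL q s.symm e where
  mul_self := h.mul_self
  mul_succ_mul i := by simpa using h.succ_mul_mul (s.symm i)
  succ_mul_mul i := by simpa using h.mul_succ_mul (s.symm i)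
  commute hij hji := h.commute (fun H => hji (by simp [H])) fun H => hij (by simp [H])

theorem commute_prod (h : IsCyclicTL q s e) {i : ι} {t : List ι} (hsucc : s i ∉ t)
    (hpred : s.symm i ∉ t) : Commute (e i) (t.map e).prod :=
  commute_prod_map fun j hj =>
    h.commute (fun H => hsucc (H ▸ hj)) fun H => hpred (by rwa [H, s.symm_apply_apply])

theorem isReducible_of_neighbours_notMem (h : IsCyclicTL q s e) {i : ι} {t : List ι}
    (hsucc : s i ∉ t) (hpred : s.symm i ∉ t) : IsReducible K e (i :: (t ++ [i])) := by
  have hprod : ((i :: (t ++ [i])).map e).prod = (q + 1) • ((t ++ [i]).map e).prod := by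
    simp only [List.map_cons, List.map_append, List.map_nil, List.prod_cons, List.prod_append,
      List.prod_nil, mul_one]
    rw [← (h.commute_prod hsucc hpred).eq, ← mul_assoc, h.mul_self, smul_mul_assoc]
  rw [IsReducible, hprod]
  exact Submodule.smul_mem _ _ (prod_mem_wordSpan (by simp))

theorem isReducible_of_pred_mem_once (h : IsCyclicTL q s e) {p : ι} {t₁ t₂ : List ι}
    (hsucc₁ : s (s p) ∉ t₁) (hsucc₂ : s (s p) ∉ t₂) (hp₁ : p ∉ t₁) (hp₂ : p ∉ t₂) :
    IsReducible K e (s p :: (t₁ ++ p :: t₂ ++ [s p])) := by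
  have h₁ : Commute (e (s p)) (t₁.map e).prod := h.commute_prod hsucc₁ (by simpa)
  have h₂ : Commute (e (s p)) (t₂.map e).prod := h.commute_prod hsucc₂ (by simpa)
  have hprod : ((s p :: (t₁ ++ p :: t₂ ++ [s p])).map e).prod =
      q • ((t₁ ++ s p :: t₂).map e).prod := by
    simp only [List.map_cons, List.map_append, List.map_nil, List.prod_cons, List.prod_append,
      List.prod_nil, mul_one]
    calc e (s p) * ((t₁.map e).prod * (e p * (t₂.map e).prod) * e (s p))
        = (e (s p) * (t₁.map e).prod) * e p * ((t₂.map e).prod * e (s p)) := by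
          simp only [mul_assoc]
      _ = (t₁.map e).prod * (e (s p) * e p * e (s p)) * (t₂.map e).prod := by
          rw [h₁.eq, ← h₂.eq]; simp only [mul_assoc]
      _ = q • ((t₁.map e).prod * (e (s p) * (t₂.map e).prod)) := by
          rw [h.succ_mul_mul]; simp only [mul_smul_comm, smul_mul_assoc, mul_assoc]
  rw [IsReducible, hprod]
  exact Submodule.smul_mem _ _ (prod_mem_wordSpan (by simp))

/-- An innermost pair `i ⋯ i` not separated by `s i` encloses its other neighbour at most once,
since two occurrences of that neighbour are not separated by `i`, which is their successor. -/
theorem isReducible_of_succ_notMem (h : IsCyclicTL q s e) (i : ι) (t : List ι) (hsucc : s i ∉ t) :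
    IsReducible K e (i :: (t ++ [i])) := by
  classical
  obtain ⟨p, rfl⟩ := s.surjective i
  by_cases hi : s p ∈ t
  · obtain ⟨t₁, t₂, rfl, -⟩ := List.eq_append_cons_of_mem hi
    exact (h.isReducible_of_succ_notMem (s p) t₁ (by simp_all)).of_infix
      ⟨[], t₂ ++ [s p], by simp⟩
  by_cases hp : p ∈ t
  · obtain ⟨t₁, t₂, rfl, hp₁⟩ := List.eq_append_cons_of_mem hp
    by_cases hp₂ : p ∈ t₂
    · obtain ⟨t₃, t₄, rfl, -⟩ := List.eq_append_cons_of_mem hp₂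
      exact (h.isReducible_of_succ_notMem p t₃ (by simp_all)).of_infix
        ⟨s p :: t₁, t₄ ++ [s p], by simp⟩
    · exact h.isReducible_of_pred_mem_once (by simp_all) (by simp_all) hp₁ hp₂
  · exact h.isReducible_of_neighbours_notMem hsucc (by simpa)
termination_by t.length
decreasing_by all_goals subst_vars; simp +arith

end IsCyclicTL

/-- A word is cyclically reduced if, around the circle, any two consecutive occurrences of a letter
are separated by both of its neighbours. The condition only concerns letters occurring at least
twice. -/
def CyclicallyReduced (s : Equiv.Perm ι) (w : List ι) : Prop :=
  ∀ i t r, w ~r i :: (t ++ i :: r) → s i ∈ t ∧ s.symm i ∈ t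

theorem IsCyclicTL.exists_isRotated_isReducible {q : K} {s : Equiv.Perm ι} {e : ι → A}
    (h : IsCyclicTL q s e) {w : List ι} (hw : ¬CyclicallyReduced s w) :
    ∃ w', w ~r w' ∧ IsReducible K e w' := by
  simp only [CyclicallyReduced, not_forall] at hw
  obtain ⟨i, t, r, hr, hi⟩ := hw
  refine ⟨_, hr, IsReducible.of_infix (l := i :: (t ++ [i])) ?_ ⟨[], r, by simp⟩⟩
  by_cases hsucc : s i ∈ t
  · exact h.symm.isReducible_of_succ_notMem i t fun hpred => hi ⟨hsucc, hpred⟩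
  · exact h.isReducible_of_succ_notMem i t hsucc

namespace CyclicallyReduced

variable [DecidableEq ι] {s : Equiv.Perm ι} {w : List ι}

/-- Any two consecutive occurrences of `s i`, read around the circle, are separated by an `i`. -/
theorem count_succ_le_one (hw : CyclicallyReduced s w) {i : ι} (hi : w.count i ≤ 1) :
    w.count (s i) ≤ 1 := by
  by_contra! hcount
  have hmem : s i ∈ w := List.count_pos_iff.1 (by omega)
  obtain ⟨u, x, rfl, hu⟩ := List.eq_append_cons_of_mem hmem
  rw [List.count_append, List.count_cons_self, List.count_eq_zero.2 hu] at hcount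
  have hmem_x : s i ∈ x := List.count_pos_iff.1 (by omega)
  obtain ⟨t, v, rfl⟩ := List.append_of_mem hmem_x
  have ht : i ∈ t := by
    simpa using (hw (s i) t (v ++ u) (by
      simpa using List.isRotated_append (l := u) (l' := s i :: (t ++ s i :: v)))).2
  have hvu : i ∈ v ++ u := by
    simpa using (hw (s i) (v ++ u) t (by
      simpa using List.isRotated_append (l := u ++ s i :: t) (l' := s i :: v))).2
  have ht_count := List.count_pos_iff.2 ht
  have hvu_count := List.count_pos_iff.2 hvu
  simp only [List.count_append, List.count_cons] at hi hvu_count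
  omega

theorem filter_ne_nil (hw : CyclicallyReduced s w) {i a : ι} {t r : List ι}
    (hr : w ~r a :: (t ++ a :: r)) (ha : a = i ∨ a = s i) :
    t.filter (fun x => x = i ∨ x = s i) ≠ [] := by
  obtain ⟨hsucc, hpred⟩ := hw a t r hr
  rcases ha with rfl | rfl
  · exact fun h => by simpa using List.filter_eq_nil_iff.1 h _ hsucc
  · exact fun h => by simpa using List.filter_eq_nil_iff.1 h _ hpred

theorem isChain_filter (hw : CyclicallyReduced s w) (i : ι) :
    (w.filter (fun x => x = i ∨ x = s i)).IsChain (· ≠ ·) := by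
  refine List.isChain_iff_forall_rel_of_append_cons_cons.2 fun {a b l₁ l₂} h => ?_
  rintro rfl
  obtain ⟨w₁, w₂, rfl, -, h₂⟩ := List.filter_eq_append_iff.1 h
  obtain ⟨u, w₃, rfl, -, ha, h₃⟩ := List.filter_eq_cons_iff.1 h₂
  obtain ⟨t, w₄, rfl, ht, -, -⟩ := List.filter_eq_cons_iff.1 h₃
  refine hw.filter_ne_nil (t := t) (r := w₄ ++ (w₁ ++ u)) (a := a) ?_ (by simpa using ha)
    (List.filter_eq_nil_iff.2 ht)
  have hr := List.isRotated_append (l := w₁ ++ u) (l' := a :: (t ++ a :: w₄))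
  simpa using hr

theorem filter_ne_cons_append_singleton (hw : CyclicallyReduced s w) (i a : ι) (v : List ι) :
    w.filter (fun x => x = i ∨ x = s i) ≠ a :: (v ++ [a]) := by
  intro h
  obtain ⟨w₁, w₂, rfl, h₁, ha, h₂⟩ := List.filter_eq_cons_iff.1 h
  obtain ⟨t, w₃, rfl, -, h₃⟩ := List.filter_eq_append_iff.1 h₂
  obtain ⟨u, w₄, rfl, -, -, h₄⟩ := List.filter_eq_cons_iff.1 h₃
  refine hw.filter_ne_nil (t := w₄ ++ w₁) (r := t ++ u) (a := a) ?_ (by simpa using ha) ?_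
  · have hr := List.isRotated_append (l := w₁ ++ a :: (t ++ u)) (l' := a :: w₄)
    simpa using hr
  · rw [List.filter_append, h₄, List.filter_eq_nil_iff.2 h₁, List.append_nil]

theorem filter_eq_flatten_replicate (hw : CyclicallyReduced s w) {i : ι} (hi : i ≠ s i)
    (hcount : 2 ≤ w.count i) :
    w.filter (fun x => x = i ∨ x = s i) =
        (List.replicate (w.count i) (w.dedup.filter (fun x => x = i ∨ x = s i))).flatten ∧
      w.count (s i) = w.count i := by
  have hfilter : ∀ x, x = i ∨ x = s i →
      (w.filter (fun x => x = i ∨ x = s i)).count x = w.count x := fun x hx =>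
    List.count_filter (by simpa using hx)
  have := eq_flatten_replicate_dedup_of_isChain_ne hi
    (v := w.filter (fun x => x = i ∨ x = s i)) (fun z hz => by simpa using List.of_mem_filter hz)
    (hw.isChain_filter i) (hw.filter_ne_cons_append_singleton i)
    (by rwa [hfilter i (.inl rfl)])
  rwa [hfilter i (.inl rfl), hfilter _ (.inr rfl), filter_dedup] at this

theorem prod_eq_pow_prod_dedup {q : K} {e : ι → A} (hw : CyclicallyReduced s w)
    (h : IsCyclicTL q s e) (hs : ∀ i, i ≠ s i) {k : ℕ} (hk : 2 ≤ k) (hcount : ∀ i, w.count i = k) :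
    (w.map e).prod = (w.dedup.map e).prod ^ k := by
  have hpow : (w.dedup.map e).prod ^ k = ((List.replicate k w.dedup).flatten.map e).prod := by
    simp [List.map_flatten, List.prod_flatten]
  have hpair : ∀ i, w.filter (fun x => x = i ∨ x = s i) =
      (List.replicate k w.dedup).flatten.filter (fun x => x = i ∨ x = s i) := fun i => by
    rw [(hw.filter_eq_flatten_replicate (hs i) (by rwa [hcount])).1, hcount, List.filter_flatten,
      List.map_replicate]
  rw [hpow]
  refine prod_map_eq_of_filter_eq e fun a b hab => ?_
  rcases hab with rfl | hab
  · have ha : a ∈ w := List.count_pos_iff.1 (by rw [hcount]; omega)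
    simp [List.filter_eq, List.count_dedup, hcount, ha]
  · by_cases hb : b = s a
    · rw [hb, hpair]
    · have ha : a = s b := by
        by_contra ha
        exact hab (h.commute hb ha)
      simp_rw [ha, or_comm (a := _ = s b), hpair]

end CyclicallyReduced

end CyclicTL

section Trace

variable {K A M : Type*} [CommRing K] [Ring A] [Algebra K A] [AddCommGroup M] [Module K M]
  {D : A →ₗ[K] M}

theorem map_mul_pow_comm (hD : ∀ x y, D (x * y) = D (y * x)) (x y : A) (k : ℕ) :
    D ((x * y) ^ k) = D ((y * x) ^ k) := by
  cases k with
  | zero => simp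
  | succ k => rw [pow_succ, ← mul_assoc, mul_pow_mul, mul_assoc, hD, mul_assoc, pow_succ]

theorem map_prod_pow_eq_of_isRotated {ι : Type*} {e : ι → A} (hD : ∀ x y, D (x * y) = D (y * x))
    {l l' : List ι} (h : l ~r l') (k : ℕ) : D ((l.map e).prod ^ k) = D ((l'.map e).prod ^ k) := by
  obtain ⟨m, rfl⟩ := h
  rw [List.rotate_eq_drop_append_take_mod, List.map_append, List.prod_append,
    map_mul_pow_comm hD, ← List.prod_append, ← List.map_append, List.take_append_drop]

theorem map_prod_eq_of_isRotated {ι : Type*} {e : ι → A} (hD : ∀ x y, D (x * y) = D (y * x))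
    {l l' : List ι} (h : l ~r l') : D (l.map e).prod = D (l'.map e).prod := by
  simpa using map_prod_pow_eq_of_isRotated hD h 1

theorem map_prod_pow_eq_zero_of_map_sub_one {ι : Type*} {e : ι → A} {l : List ι} {k : ℕ}
    (hker : wordSpan K e (k * l.length) ≤ LinearMap.ker D)
    (hD : D ((l.map fun i => e i - 1).prod ^ k) = 0) : D ((l.map e).prod ^ k) = 0 := by
  have hsub : (l.map e).prod - (l.map fun i => e i - 1).prod ∈ wordSpan K e l.length :=
    sub_mem_comm_iff.1 (prod_map_sub_one_sub_mem_wordSpan l)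
  have hpow := hker (pow_sub_pow_mem_wordSpan (prod_mem_wordSpan l.length.lt_succ_self) hsub k)
  rwa [LinearMap.mem_ker, map_sub, hD, sub_zero] at hpow

/-- For `x = 1 + s` and `y = 1 + a`, where `s` and `a` are neighbouring generators, this is
`1 + s * a * s⁻¹`. -/
def affineGen (q : Kˣ) (x y : A) : A := x + y - x * y - (↑q⁻¹ : K) • (y * x)

theorem mul_affineGen {q : Kˣ} {x y : A} (hx : x * x = ((q : K) + 1) • x)
    (hxy : x * y * x = (q : K) • x) : x * affineGen q x y = (q : K) • (x - x * y) := by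
  have h : x * affineGen q x y = x * x + x * y - x * x * y - (↑q⁻¹ : K) • (x * y * x) := by
    simp only [affineGen, mul_sub, mul_add, mul_smul_comm, mul_assoc]
  rw [h, hx, hxy, smul_smul, Units.inv_mul, smul_mul_assoc]
  module

theorem affineGen_mul {q : Kˣ} {x y : A} (hx : x * x = ((q : K) + 1) • x)
    (hxy : x * y * x = (q : K) • x) : affineGen q x y * x = x - (↑q⁻¹ : K) • (y * x) := by
  have h : affineGen q x y * x = x * x + y * x - x * y * x - (↑q⁻¹ : K) • (y * (x * x)) := by
    simp only [affineGen, sub_mul, add_mul, smul_mul_assoc, mul_assoc]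
  rw [h, hx, hxy, mul_smul_comm, smul_smul, mul_add, Units.inv_mul]
  module

end Trace

section Markov

variable {K A M : Type*} [CommRing K] [Ring A] [Algebra K A] [AddCommGroup M] [Module K M]
  {q : Kˣ} {n : ℕ} {e : Fin (n + 1) → A} {R : Subalgebra K A} {D : A →ₗ[K] M}

/-- A trace `D` that vanishes on the Markov elements over a subalgebra `R`, which stands for the
image of `F_n`. The letters are those of `monomialGen` below: `0` and `Fin.last n` stand for
`1 + g_{a_{n+1}}` and `1 + g_{σ_n}`. -/
structure VanishesOnMarkov (q : Kˣ) (e : Fin (n + 1) → A) (R : Subalgebra K A) (D : A →ₗ[K] M) :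
    Prop where
  isCyclicTL : IsCyclicTL (q : K) (finRotate (n + 1)) e
  trace (x y : A) : D (x * y) = D (y * x)
  mem {i : Fin (n + 1)} (h0 : i ≠ 0) (hlast : i ≠ Fin.last n) : e i ∈ R
  affineGen_mem : affineGen q (e (Fin.last n)) (e 0) ∈ R
  map_eq_zero {x : A} (hx : x ∈ R) : D x = 0
  map_last_mul {x : A} (hx : x ∈ R) : D (e (Fin.last n) * x) = 0

theorem finRotate_symm_zero : (finRotate (n + 1)).symm 0 = Fin.last n := by
  rw [Equiv.symm_apply_eq, finRotate_last]

namespace IsCyclicTL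

theorem commute_zero_prod {q : K} (h : IsCyclicTL q (finRotate (n + 1)) e) {l : List (Fin (n + 1))}
    (h1 : 1 ∉ l) (hlast : Fin.last n ∉ l) : Commute (e 0) (l.map e).prod :=
  h.commute_prod (by simpa using h1) (by rwa [finRotate_symm_zero])

theorem commute_of_val_add_one_lt {q : K} (h : IsCyclicTL q (finRotate (n + 1)) e)
    {i j : Fin (n + 1)} (hi : i ≠ 0) (hij : i.val + 1 < j.val) : Commute (e i) (e j) := by
  refine h.commute (fun H => ?_) fun H => ?_
  · have hlast : i ≠ Fin.last n := Fin.ne_of_lt (Fin.lt_def.2 (by rw [Fin.val_last]; omega))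
    rw [H, coe_finRotate_of_ne_last hlast] at hij
    exact hij.false
  · rcases eq_or_ne j (Fin.last n) with rfl | hj
    · exact hi (by rw [H, finRotate_last])
    · rw [H, coe_finRotate_of_ne_last hj] at hij
      omega

theorem last_zero_mul_zero_last_mem_wordSpan {q : K} (h : IsCyclicTL q (finRotate (n + 1)) e)
    {l : List (Fin (n + 1))} (hlast : Fin.last n ∉ l) :
    ((Fin.last n :: 0 :: l).map e).prod * ((0 :: Fin.last n :: l).map e).prod ∈
      wordSpan K e (2 * (l.length + 2)) := by
  have hred : IsReducible K e ((Fin.last n :: 0 :: l) ++ (0 :: Fin.last n :: l)) :=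
    (h.symm.isReducible_of_succ_notMem 0 l (by rwa [finRotate_symm_zero])).of_infix
      ⟨[Fin.last n], Fin.last n :: l, by simp⟩
  rwa [IsReducible, List.map_append, List.prod_append, List.length_append, List.length_cons,
    List.length_cons, List.length_cons, List.length_cons, ← two_mul] at hred

theorem zero_last_mul_last_zero_mem_wordSpan {q : K} (h : IsCyclicTL q (finRotate (n + 1)) e)
    {l : List (Fin (n + 1))} (h0 : 0 ∉ l) :
    ((0 :: Fin.last n :: l).map e).prod * ((Fin.last n :: 0 :: l).map e).prod ∈
      wordSpan K e (2 * (l.length + 2)) := by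
  have hred : IsReducible K e ((0 :: Fin.last n :: l) ++ (Fin.last n :: 0 :: l)) :=
    (h.isReducible_of_succ_notMem (Fin.last n) l (by rwa [finRotate_last])).of_infix
      ⟨[0], 0 :: l, by simp⟩
  rwa [IsReducible, List.map_append, List.prod_append, List.length_append, List.length_cons,
    List.length_cons, List.length_cons, List.length_cons, ← two_mul] at hred

end IsCyclicTL

namespace VanishesOnMarkov

theorem last_mul_last (h : VanishesOnMarkov q e R D) :
    e (Fin.last n) * e (Fin.last n) = ((q : K) + 1) • e (Fin.last n) :=
  h.isCyclicTL.mul_self _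

theorem last_mul_zero_mul_last (h : VanishesOnMarkov q e R D) :
    e (Fin.last n) * e 0 * e (Fin.last n) = (q : K) • e (Fin.last n) := by
  simpa using h.isCyclicTL.mul_succ_mul (Fin.last n)

theorem prod_mem (h : VanishesOnMarkov q e R D)
    {l : List (Fin (n + 1))} (h0 : 0 ∉ l) (hlast : Fin.last n ∉ l) :
    (l.map e).prod ∈ R :=
  R.list_prod_mem fun x hx => by
    obtain ⟨i, hi, rfl⟩ := List.mem_map.1 hx
    exact h.mem (fun H => h0 (H ▸ hi)) fun H => hlast (H ▸ hi)

theorem map_last_mul_zero_mul (h : VanishesOnMarkov q e R D)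
    {x : A} (hx : x ∈ R) : D (e (Fin.last n) * e 0 * x) = 0 := by
  have hE := h.map_last_mul (R.mul_mem h.affineGen_mem hx)
  rw [← mul_assoc, mul_affineGen h.last_mul_last h.last_mul_zero_mul_last, smul_mul_assoc,
    map_smul, sub_mul, map_sub, h.map_last_mul hx, zero_sub, smul_neg, neg_eq_zero] at hE
  exact q.isUnit.smul_eq_zero.1 hE

theorem map_zero_mul_last_mul (h : VanishesOnMarkov q e R D)
    {x : A} (hx : x ∈ R) : D (e 0 * e (Fin.last n) * x) = 0 := by
  have hE := h.map_last_mul (R.mul_mem hx h.affineGen_mem)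
  rw [← mul_assoc, h.trace, ← mul_assoc, affineGen_mul h.last_mul_last h.last_mul_zero_mul_last,
    sub_mul, map_sub, smul_mul_assoc, map_smul, h.map_last_mul hx, zero_sub, neg_eq_zero] at hE
  exact q⁻¹.isUnit.smul_eq_zero.1 hE

theorem map_zero_mul (h : VanishesOnMarkov q e R D) {x : A} (hx : x ∈ R) : D (e 0 * x) = 0 := by
  have hE := h.map_eq_zero (R.mul_mem h.affineGen_mem hx)
  simpa [affineGen, sub_mul, add_mul, h.map_last_mul hx, h.map_last_mul_zero_mul hx,
    h.map_zero_mul_last_mul hx] using hE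

theorem map_prod_last_cons_append_zero_cons (h : VanishesOnMarkov q e R D)
    {a b : List (Fin (n + 1))} (ha0 : 0 ∉ a) (hb0 : 0 ∉ b)
    (ha : Fin.last n ∉ a) (hb : Fin.last n ∉ b) (h1 : 1 ∉ a ∨ 1 ∉ b) :
    D ((Fin.last n :: (a ++ 0 :: b)).map e).prod = 0 := by
  have hab := R.mul_mem (h.prod_mem ha0 ha) (h.prod_mem hb0 hb)
  simp only [List.map_cons, List.map_append, List.prod_cons, List.prod_append]
  rcases h1 with h1 | h1
  · have hcomm := h.isCyclicTL.commute_zero_prod h1 ha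
    rw [hcomm.symm.left_comm, ← mul_assoc]
    exact h.map_last_mul_zero_mul hab
  · have hcomm := h.isCyclicTL.commute_zero_prod h1 hb
    rw [hcomm.eq, ← mul_assoc, ← mul_assoc, h.trace, mul_assoc, ← mul_assoc]
    exact h.map_zero_mul_last_mul hab

theorem map_prod_eq_zero_of_count_le_one (h : VanishesOnMarkov q e R D) (hn : 2 ≤ n)
    {w : List (Fin (n + 1))}
    (hw : CyclicallyReduced (finRotate (n + 1)) w) (hlast : w.count (Fin.last n) ≤ 1)
    (h0 : w.count 0 ≤ 1) : D (w.map e).prod = 0 := by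
  by_cases hmem : Fin.last n ∈ w
  · obtain ⟨x, hrot, hx⟩ := exists_isRotated_cons_of_count_le_one hmem hlast
    rw [map_prod_eq_of_isRotated h.trace hrot]
    by_cases hx0 : 0 ∈ x
    · obtain ⟨a, b, rfl, ha⟩ := List.eq_append_cons_of_mem hx0
      have h1 : w.count 1 ≤ 1 := by
        simpa using hw.count_succ_le_one (i := 0) h0
      have hlast0 : Fin.last n ≠ 0 := Fin.ne_of_gt (Fin.lt_def.2 (by simpa using by omega))
      have hb : b.count 0 = 0 := by
        rw [hrot.perm.count_eq, List.count_cons_of_ne hlast0, List.count_append,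
          List.count_cons_self] at h0
        omega
      have h1ab : a.count 1 + b.count 1 ≤ 1 := by
        rw [hrot.perm.count_eq, List.count_cons, List.count_append, List.count_cons] at h1
        omega
      have h1_notMem : 1 ∉ a ∨ 1 ∉ b := by
        simp only [← List.count_eq_zero]
        omega
      exact h.map_prod_last_cons_append_zero_cons ha (List.count_eq_zero.1 hb) (by simp_all)
        (by simp_all) h1_notMem
    · simpa using h.map_last_mul (h.prod_mem hx0 hx)
  · by_cases hmem0 : 0 ∈ w
    · obtain ⟨x, hrot, hx⟩ := exists_isRotated_cons_of_count_le_one hmem0 h0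
      have hxlast : Fin.last n ∉ x := fun hx => hmem (hrot.mem_iff.2 (List.mem_cons_of_mem _ hx))
      rw [map_prod_eq_of_isRotated h.trace hrot]
      simpa using h.map_zero_mul (h.prod_mem hx hxlast)
    · exact h.map_eq_zero (h.prod_mem hmem0 hmem)

/-- With `E` the affine generator and `y` the value of `l`, the vanishing element
`(E * y) ^ (k + 1)` is, up to sign and shorter words, the sum of `(e n * e 0 * y) ^ (k + 1)` and a
multiple of `(e 0 * e n * y) ^ (k + 1)`: the mixed terms are reducible. -/
theorem map_pow_prod_last_zero_eq_zero (h : VanishesOnMarkov q e R D)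
    {k : ℕ} {l : List (Fin (n + 1))} (h0 : 0 ∉ l)
    (hlast : Fin.last n ∉ l)
    (hker : wordSpan K e ((k + 1) * (l.length + 2)) ≤ LinearMap.ker D)
    (hl : D (((0 :: Fin.last n :: l).map e).prod ^ (k + 1)) = 0) :
    D (((Fin.last n :: 0 :: l).map e).prod ^ (k + 1)) = 0 := by
  set P := ((Fin.last n :: 0 :: l).map e).prod with hP
  set Q := ((0 :: Fin.last n :: l).map e).prod with hQ
  set E := affineGen q (e (Fin.last n)) (e 0) * (l.map e).prod with hE
  have hP_mem : P ∈ wordSpan K e (l.length + 2 + 1) := prod_mem_wordSpan (by simp)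
  have hQ_mem : (↑q⁻¹ : K) • Q ∈ wordSpan K e (l.length + 2 + 1) :=
    Submodule.smul_mem _ _ (prod_mem_wordSpan (by simp))
  have hPQ : P * ((↑q⁻¹ : K) • Q) ∈ wordSpan K e (2 * (l.length + 2)) := by
    rw [mul_smul_comm]
    exact Submodule.smul_mem _ _ (h.isCyclicTL.last_zero_mul_zero_last_mem_wordSpan hlast)
  have hQP : (↑q⁻¹ : K) • Q * P ∈ wordSpan K e (2 * (l.length + 2)) := by
    rw [smul_mul_assoc]
    exact Submodule.smul_mem _ _ (h.isCyclicTL.zero_last_mul_last_zero_mem_wordSpan h0)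
  have hsub : P + (↑q⁻¹ : K) • Q - -E ∈ wordSpan K e (l.length + 2) := by
    have hsplit : P + (↑q⁻¹ : K) • Q - -E =
        ((Fin.last n :: l).map e).prod + ((0 :: l).map e).prod := by
      simp only [hP, hQ, hE, affineGen, sub_mul, add_mul, smul_mul_assoc, List.map_cons,
        List.prod_cons, mul_assoc]
      abel
    rw [hsplit]
    exact add_mem (prod_mem_wordSpan (by simp)) (prod_mem_wordSpan (by simp))
  have hE_pow : D ((-E) ^ (k + 1)) = 0 :=
    h.map_eq_zero (R.pow_mem (R.neg_mem (R.mul_mem h.affineGen_mem (h.prod_mem h0 hlast))) _)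
  have hsum := hker (pow_sub_pow_mem_wordSpan (add_mem hP_mem hQ_mem) hsub (k + 1))
  have hadd := hker (add_pow_sub_mem_wordSpan hP_mem hQ_mem hPQ hQP k)
  rw [LinearMap.mem_ker, map_sub, hE_pow, sub_zero] at hsum
  rw [LinearMap.mem_ker, map_sub, map_add, hsum, smul_pow, map_smul, hl, smul_zero, add_zero,
    zero_sub, neg_eq_zero] at hadd
  exact hadd

end VanishesOnMarkov

/-- The word `n d u` contains each letter once and, up to the end of `d`, lists the letters
greater than `i` in decreasing order. -/
structure IsPartlySorted (i : ℕ) (d u : List (Fin (n + 1))) : Prop where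
  pairwise : (Fin.last n :: d).Pairwise (· > ·)
  mem_left (x : Fin (n + 1)) : x ∈ d ↔ i < x.val ∧ x.val < n
  nodup : u.Nodup
  mem_right (x : Fin (n + 1)) : x ∈ u ↔ x.val ≤ i

namespace IsPartlySorted

variable {i : ℕ} {d u u' : List (Fin (n + 1))}

theorem perm (h : IsPartlySorted i d u) (hu : u.Perm u') : IsPartlySorted i d u' where
  pairwise := h.pairwise
  mem_left := h.mem_left
  nodup := hu.nodup_iff.1 h.nodup
  mem_right x := by rw [← hu.mem_iff, h.mem_right]

theorem nodup_append (h : IsPartlySorted i d u) (hi : i < n) :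
    (Fin.last n :: (d ++ u)).Nodup := by
  have hd := h.pairwise.imp (S := (· ≠ ·)) fun hxy => ne_of_gt hxy
  rw [← List.cons_append]
  refine List.nodup_append.2 ⟨hd, h.nodup, fun x hx y hy hxy => ?_⟩
  subst hxy
  have hxi := (h.mem_right x).1 hy
  rcases List.mem_cons.1 hx with rfl | hx
  · rw [Fin.val_last] at hxi; omega
  · have := (h.mem_left x).1 hx
    omega

theorem mem_append (h : IsPartlySorted i d u) (x : Fin (n + 1)) : x ∈ Fin.last n :: (d ++ u) := by
  rw [List.mem_cons, List.mem_append, h.mem_left, h.mem_right, Fin.ext_iff, Fin.val_last]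
  omega

theorem append_perm_finRange (h : IsPartlySorted i d u) (hi : i < n) :
    (Fin.last n :: (d ++ u)).Perm (List.finRange (n + 1)) :=
  (List.perm_ext_iff_of_nodup (h.nodup_append hi) (List.nodup_finRange _)).2 fun x => by
    simp only [h.mem_append, List.mem_finRange]

theorem length_append (h : IsPartlySorted i d u) (hi : i < n) :
    (Fin.last n :: (d ++ u)).length = n + 1 := by
  rw [(h.append_perm_finRange hi).length_eq, List.length_finRange]

theorem sort_next {a b : List (Fin (n + 1))} {x : Fin (n + 1)} (hx : x.val = i + 1) (hi : i + 1 < n)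
    (h : IsPartlySorted (i + 1) d (a ++ x :: b)) : IsPartlySorted i (d ++ [x]) (b ++ a) where
  pairwise := by
    rw [← List.cons_append, List.pairwise_append]
    refine ⟨h.pairwise, List.pairwise_singleton _ _, fun y hy z hz => ?_⟩
    rw [List.mem_singleton.1 hz, gt_iff_lt, Fin.lt_def, hx]
    rcases List.mem_cons.1 hy with rfl | hy
    · simpa using hi
    · exact ((h.mem_left y).1 hy).1
  mem_left y := by
    rw [List.mem_append, h.mem_left, List.mem_singleton, Fin.ext_iff, hx]
    omega
  nodup := by
    have := (List.perm_middle.nodup_iff.1 h.nodup).of_cons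
    exact List.perm_append_comm.nodup_iff.1 this
  mem_right y := by
    have hnd := List.nodup_cons.1 (List.perm_middle.nodup_iff.1 h.nodup)
    have hy := h.mem_right y
    have hyx : y ∈ b ++ a → y.val ≠ i + 1 := fun hmem H =>
      hnd.1 (by rw [← Fin.ext (H.trans hx.symm)]; simpa [or_comm] using hmem)
    simp only [List.mem_append, List.mem_cons, Fin.ext_iff (a := y) (b := x), hx] at hy hyx ⊢
    by_cases hyi : y.val = i + 1 <;> grind

theorem zero_notMem_left (h : IsPartlySorted i d u) : 0 ∉ d := fun h0 =>
  Nat.not_lt_zero i ((h.mem_left 0).1 h0).1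

theorem last_notMem_left (h : IsPartlySorted i d u) : Fin.last n ∉ d := fun hlast =>
  ((h.mem_left _).1 hlast).2.ne (Fin.val_last n)

theorem last_notMem_right (h : IsPartlySorted i d u) (hi : i < n) : Fin.last n ∉ u := fun hlast =>
  hi.not_ge (by simpa using (h.mem_right _).1 hlast)

theorem eq_reverse_finRange (h : IsPartlySorted 0 d u) (hn : 0 < n) :
    Fin.last n :: (d ++ u) = (List.finRange (n + 1)).reverse := by
  have hsorted : (Fin.last n :: (d ++ u)).Pairwise (· > ·) := by
    rw [← List.cons_append, List.pairwise_append]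
    refine ⟨h.pairwise, h.nodup.imp_of_mem fun {x y} hx hy hxy => ?_, fun x hx y hy => ?_⟩
    · have hx0 := (h.mem_right x).1 hx
      have hy0 := (h.mem_right y).1 hy
      exact absurd (Fin.ext (by omega)) hxy
    · have hy0 := (h.mem_right y).1 hy
      rw [gt_iff_lt, Fin.lt_def]
      rcases List.mem_cons.1 hx with rfl | hx
      · rw [Fin.val_last]; omega
      · have := (h.mem_left x).1 hx
        omega
  exact ((h.append_perm_finRange hn).trans (List.reverse_perm _).symm).eq_of_pairwise
    (fun x y _ _ hxy hyx => absurd hxy hyx.asymm) hsorted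
    (List.pairwise_reverse.2 (List.pairwise_lt_finRange _))

end IsPartlySorted

namespace VanishesOnMarkov

variable {k i : ℕ}

theorem map_pow_eq_zero_of_zero_at_end (h : VanishesOnMarkov q e R D) (hi : i + 1 < n)
    (ih : ∀ d u, IsPartlySorted i d u → D (((Fin.last n :: (d ++ u)).map e).prod ^ k) = 0)
    {d y : List (Fin (n + 1))} (hdy : IsPartlySorted (i + 1) d (y ++ [0])) :
    D (((Fin.last n :: (d ++ (y ++ [0]))).map e).prod ^ k) = 0 := by
  obtain ⟨x, hx⟩ : ∃ x : Fin (n + 1), x.val = i + 1 := ⟨⟨i + 1, by omega⟩, rfl⟩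
  have hxy : x ∈ y := by
    have hx_mem := (hdy.mem_right x).2 hx.le
    have hx0 : x ≠ 0 := fun H => by simp [H] at hx
    simpa [hx0] using hx_mem
  obtain ⟨a, b, rfl⟩ := List.append_of_mem hxy
  have hnext := IsPartlySorted.sort_next hx hi (a := a) (b := b ++ [0]) (by simpa using hdy)
  have hcomm : Commute ((Fin.last n :: d).map e).prod (a.map e).prod := by
    refine commute_prod_map fun w hw => (commute_prod_map fun z hz => ?_).symm
    have hw0 : w ≠ 0 := by
      rintro rfl
      exact (List.nodup_append.1 hdy.nodup).2.2 0 (by simp [hw]) 0 (by simp) rfl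
    have hwi : w.val ≤ i := (hnext.mem_right w).1 (by simp [hw])
    refine h.isCyclicTL.commute_of_val_add_one_lt hw0 ?_
    rcases List.mem_cons.1 hz with rfl | hz
    · rw [Fin.val_last]; omega
    · have := (hdy.mem_left z).1 hz
      omega
  have hprod : ((Fin.last n :: (d ++ (a ++ x :: b ++ [0]))).map e).prod =
      ((a ++ (Fin.last n :: (d ++ x :: (b ++ [0])))).map e).prod := by
    simp only [List.map_append, List.map_cons, List.prod_append, List.prod_cons] at hcomm ⊢
    rw [← mul_assoc, mul_assoc (a.map e).prod, ← mul_assoc (e _ * _), hcomm.eq]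
    simp only [mul_assoc]
  rw [hprod, map_prod_pow_eq_of_isRotated h.trace List.isRotated_append]
  simpa using ih _ _ hnext

theorem map_pow_eq_zero_of_zero_at_front (h : VanishesOnMarkov q e R D) (hi : i + 1 < n)
    (hker : wordSpan K e ((k + 1) * (n + 1)) ≤ LinearMap.ker D)
    (ih : ∀ d u, IsPartlySorted i d u → D (((Fin.last n :: (d ++ u)).map e).prod ^ (k + 1)) = 0)
    {d y : List (Fin (n + 1))} (hdy : IsPartlySorted (i + 1) d (0 :: y)) :
    D (((Fin.last n :: (d ++ 0 :: y)).map e).prod ^ (k + 1)) = 0 := by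
  have hlength : (d ++ y).length + 2 = n + 1 := by
    simpa [add_assoc] using hdy.length_append hi
  have hzero : 0 ∉ d ++ y :=
    List.mem_append.not.2 (not_or.2 ⟨hdy.zero_notMem_left, (List.nodup_cons.1 hdy.nodup).1⟩)
  have hlast : Fin.last n ∉ d ++ y := fun hmem =>
    (List.nodup_cons.1 (hdy.nodup_append hi)).1 (by
      rw [List.mem_append] at hmem ⊢
      exact hmem.imp_right (List.mem_cons_of_mem 0))
  have hone : 1 ∉ d := fun hmem => by
    have := ((hdy.mem_left 1).1 hmem).1
    rw [Fin.val_one', Nat.mod_eq_of_lt (by omega)] at this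
    omega
  have hcomm : Commute (e 0) (d.map e).prod :=
    h.isCyclicTL.commute_zero_prod hone hdy.last_notMem_left
  have hprod : ((Fin.last n :: (d ++ 0 :: y)).map e).prod =
      ((Fin.last n :: 0 :: (d ++ y)).map e).prod := by
    simp only [List.map_append, List.map_cons, List.prod_append, List.prod_cons, hcomm.left_comm]
  have hrot : 0 :: Fin.last n :: (d ++ y) ~r Fin.last n :: (d ++ (y ++ [0])) := by
    simpa using List.isRotated_append (l := [0]) (l' := Fin.last n :: (d ++ y))
  rw [hprod]
  refine h.map_pow_prod_last_zero_eq_zero hzero hlast (by rwa [hlength]) ?_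
  rw [map_prod_pow_eq_of_isRotated h.trace hrot]
  exact h.map_pow_eq_zero_of_zero_at_end hi ih (hdy.perm (List.perm_append_singleton 0 y).symm)

theorem map_pow_eq_zero_of_isPartlySorted (h : VanishesOnMarkov q e R D)
    (hker : wordSpan K e ((k + 1) * (n + 1)) ≤ LinearMap.ker D)
    (hrev : D (((List.finRange (n + 1)).reverse.map e).prod ^ (k + 1)) = 0) (hi : i < n)
    (d u : List (Fin (n + 1))) (hdu : IsPartlySorted i d u) :
    D (((Fin.last n :: (d ++ u)).map e).prod ^ (k + 1)) = 0 := by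
  induction i generalizing d u with
  | zero => rwa [hdu.eq_reverse_finRange hi]
  | succ i ih =>
    specialize ih (by omega)
    obtain ⟨a, b, rfl⟩ := List.append_of_mem ((hdu.mem_right 0).2 (by simp))
    have hlast := hdu.last_notMem_right hi
    by_cases h1 : 1 ∈ b
    · have hcomm : Commute (e 0) (a.map e).prod := h.isCyclicTL.commute_zero_prod
        (fun ha => (List.nodup_append.1 hdu.nodup).2.2 1 ha 1 (List.mem_cons_of_mem 0 h1) rfl)
        fun ha => hlast (List.mem_append_left _ ha)
      have hprod : ((Fin.last n :: (d ++ (a ++ 0 :: b))).map e).prod =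
          ((Fin.last n :: (d ++ 0 :: (a ++ b))).map e).prod := by
        simp only [List.map_append, List.map_cons, List.prod_append, List.prod_cons,
          hcomm.symm.left_comm]
      rw [hprod]
      exact h.map_pow_eq_zero_of_zero_at_front hi hker ih (hdu.perm List.perm_middle)
    · have hcomm : Commute (e 0) (b.map e).prod := h.isCyclicTL.commute_zero_prod h1 fun hb =>
        hlast (List.mem_append_right _ (List.mem_cons_of_mem 0 hb))
      have hprod : ((Fin.last n :: (d ++ (a ++ 0 :: b))).map e).prod =
          ((Fin.last n :: (d ++ ((a ++ b) ++ [0]))).map e).prod := by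
        simp [hcomm.eq]
      rw [hprod]
      exact h.map_pow_eq_zero_of_zero_at_end hi ih (hdu.perm (by grind))

/-- All Coxeter words are related, up to shorter words, by rotations, commutations and exchanges of
`n` and `0` at the front. -/
theorem map_pow_prod_eq_zero_of_nodup (h : VanishesOnMarkov q e R D) (hn : 0 < n)
    (hker : wordSpan K e ((k + 1) * (n + 1)) ≤ LinearMap.ker D)
    (hrev : D (((List.finRange (n + 1)).reverse.map e).prod ^ (k + 1)) = 0)
    {c : List (Fin (n + 1))} (hnodup : c.Nodup) (hmem : ∀ x, x ∈ c) :
    D ((c.map e).prod ^ (k + 1)) = 0 := by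
  obtain ⟨a, b, rfl⟩ := List.append_of_mem (hmem (Fin.last n))
  rw [map_prod_pow_eq_of_isRotated h.trace List.isRotated_append]
  have hba : (Fin.last n :: (b ++ a)).Nodup := List.isRotated_append.nodup_iff.1 hnodup
  refine h.map_pow_eq_zero_of_isPartlySorted hker hrev (i := n - 1) (by omega) [] (b ++ a)
    ⟨List.pairwise_singleton _ _, fun x => by simp only [List.not_mem_nil, false_iff]; omega,
      hba.of_cons, fun x => ?_⟩
  have hx : x ∈ Fin.last n :: (b ++ a) := List.isRotated_append.mem_iff.1 (hmem x)
  refine ⟨fun hxba => ?_, fun hxn => (List.mem_cons.1 hx).resolve_left fun hlast => ?_⟩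
  · have hlast : x ≠ Fin.last n := fun H => (List.nodup_cons.1 hba).1 (H ▸ hxba)
    have := Fin.val_lt_last hlast
    omega
  · rw [hlast, Fin.val_last] at hxn
    omega

end VanishesOnMarkov

theorem ne_finRotate (hn : 0 < n) (i : Fin (n + 1)) : i ≠ finRotate (n + 1) i := by
  rw [finRotate_apply, ne_eq, left_eq_add, Fin.one_eq_zero_iff]
  omega

namespace CyclicallyReduced

variable {w : List (Fin (n + 1))}

theorem count_eq_count_zero (hw : CyclicallyReduced (finRotate (n + 1)) w) (hn : 0 < n)
    (h0 : 2 ≤ w.count 0) (i : Fin (n + 1)) : w.count i = w.count 0 := by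
  induction i using Fin.induction with
  | zero => rfl
  | succ i ih =>
    have hrot : finRotate (n + 1) i.castSucc = i.succ := by
      rw [finRotate_apply, Fin.coeSucc_eq_succ]
    rw [← hrot, (hw.filter_eq_flatten_replicate (ne_finRotate hn _) (by rwa [ih])).2, ih]

theorem two_le_count_zero (hw : CyclicallyReduced (finRotate (n + 1)) w) (hn : 0 < n)
    (h : ¬(w.count (Fin.last n) ≤ 1 ∧ w.count 0 ≤ 1)) : 2 ≤ w.count 0 := by
  by_contra! h0
  have hlast := (hw.filter_eq_flatten_replicate (ne_finRotate hn (Fin.last n)) (by omega)).2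
  rw [finRotate_last] at hlast
  omega

end CyclicallyReduced

theorem length_eq_mul_of_count_eq {w : List (Fin (n + 1))} {k : ℕ} (h : ∀ i, w.count i = k) :
    w.length = k * (n + 1) := by
  have := Multiset.sum_count_eq_card (s := Finset.univ) (m := (w : Multiset (Fin (n + 1))))
    fun _ _ => Finset.mem_univ _
  simpa [h, mul_comm] using this.symm

namespace VanishesOnMarkov

theorem map_prod_eq_zero_of_two_le_count_zero (h : VanishesOnMarkov q e R D) (hn : 0 < n)
    {w : List (Fin (n + 1))}
    (hw : CyclicallyReduced (finRotate (n + 1)) w) (h0 : 2 ≤ w.count 0)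
    (hker : wordSpan K e w.length ≤ LinearMap.ker D)
    (hG : ∀ k, 2 ≤ k →
      D (((List.finRange (n + 1)).reverse.map fun i => e i - 1).prod ^ k) = 0) :
    D (w.map e).prod = 0 := by
  have hcount := hw.count_eq_count_zero hn h0
  rw [length_eq_mul_of_count_eq hcount] at hker
  have hrev := map_prod_pow_eq_zero_of_map_sub_one (l := (List.finRange (n + 1)).reverse)
    (by simpa using hker) (hG _ h0)
  have hmem : ∀ x, x ∈ w.dedup := fun x =>
    List.mem_dedup.2 (List.count_pos_iff.1 (by rw [hcount]; omega))
  rw [hw.prod_eq_pow_prod_dedup h.isCyclicTL (ne_finRotate hn) h0 hcount]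
  obtain ⟨k, hk⟩ : ∃ k, w.count 0 = k + 1 := ⟨w.count 0 - 1, by omega⟩
  rw [hk] at hker hrev ⊢
  exact h.map_pow_prod_eq_zero_of_nodup hn hker hrev w.nodup_dedup hmem

theorem wordSpan_le_ker (h : VanishesOnMarkov q e R D) (hn : 2 ≤ n)
    (hG : ∀ k, 2 ≤ k → D (((List.finRange (n + 1)).reverse.map fun i => e i - 1).prod ^ k) = 0)
    (m : ℕ) : wordSpan K e m ≤ LinearMap.ker D := by
  induction m with
  | zero => simp [wordSpan]
  | succ m ih =>
    refine Submodule.span_le.2 ?_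
    rintro _ ⟨w, hw, rfl⟩
    have hker := (wordSpan_mono (Nat.lt_succ_iff.1 hw)).trans ih
    by_cases hred : CyclicallyReduced (finRotate (n + 1)) w
    · by_cases hcount : w.count (Fin.last n) ≤ 1 ∧ w.count 0 ≤ 1
      · exact h.map_prod_eq_zero_of_count_le_one hn hred hcount.1 hcount.2
      · have h0 := hred.two_le_count_zero (by omega) hcount
        exact h.map_prod_eq_zero_of_two_le_count_zero (by omega) hred h0 hker hG
    · obtain ⟨w', hrot, hw'⟩ := h.isCyclicTL.exists_isRotated_isReducible hred
      rw [SetLike.mem_coe, LinearMap.mem_ker, map_prod_eq_of_isRotated h.trace hrot]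
      exact hker (hrot.perm.length_eq ▸ hw')

theorem eq_zero (h : VanishesOnMarkov q e R D) (hn : 2 ≤ n)
    (hG : ∀ k, 2 ≤ k → D (((List.finRange (n + 1)).reverse.map fun i => e i - 1).prod ^ k) = 0)
    (htop : Algebra.adjoin K (Set.range e) = ⊤) : D = 0 := by
  rw [← LinearMap.ker_eq_top, eq_top_iff, ← Algebra.top_toSubmodule, ← htop,
    Algebra.adjoin_eq_span, Submodule.span_le]
  intro x hx
  obtain ⟨l, hl, rfl⟩ := Submonoid.exists_list_of_mem_closure hx
  obtain ⟨w, rfl⟩ := (Set.range_list_map e).ge hl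
  exact h.wordSpan_le_ker hn hG _ (prod_mem_wordSpan w.length.lt_succ_self)

end VanishesOnMarkov

end Markov

section Generators

variable {K : Type*} [CommRing K]

section Ring

variable {A : Type*} [Ring A] [Algebra K A] {s a : A}

theorem one_add_mul_self {q : K} (hs : s * s = (q - 1) • s + algebraMap K A q) :
    (1 + s) * (1 + s) = (q + 1) • (1 + s) := by
  have hexpand : (1 + s) * (1 + s) = 1 + s + s + s * s := by noncomm_ring
  rw [hexpand, hs, Algebra.algebraMap_eq_smul_one]
  module

theorem one_add_mul_one_add_mul_one_add {q : K} (hs : s * s = (q - 1) • s + algebraMap K A q)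
    (hsa : s * a * s + s * a + a * s + s + a + 1 = 0) :
    (1 + s) * (1 + a) * (1 + s) = q • (1 + s) := by
  have hexpand : (1 + s) * (1 + a) * (1 + s) =
      (s * a * s + s * a + a * s + s + a + 1) + s + s * s := by noncomm_ring
  rw [hexpand, hsa, hs, Algebra.algebraMap_eq_smul_one]
  module

theorem affineGen_one_add_one_add {q : Kˣ}
    (hsa : s * a * s + s * a + a * s + s + a + 1 = 0) :
    affineGen q (1 + s) (1 + a) = 1 + s * a * qinv (q : K) s := by
  have hconj : s * a * qinv (q : K) s =
      (↑q⁻¹ : K) • (s * a * s) - (s * a - (↑q⁻¹ : K) • (s * a)) := by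
    rw [qinv, Ring.inverse_unit, Algebra.algebraMap_eq_smul_one, mul_smul_comm, mul_sub,
      mul_smul_comm, mul_one, smul_sub, smul_smul, mul_sub, Units.inv_mul, mul_one]
    module
  have hsas : s * a * s = -(s * a + a * s + s + a + 1) := by
    rw [eq_neg_iff_add_eq_zero, ← hsa]
    abel
  have hexpand : affineGen q (1 + s) (1 + a) =
      1 - s * a - (↑q⁻¹ : K) • (a * s + s + a + 1) := by
    rw [affineGen]
    congr 1
    · noncomm_ring
    · congr 1
      noncomm_ring
  rw [hconj, hsas, hexpand]
  module

end Ring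

variable {q : K} {n : ℕ}

theorem csucc_eq_add_one (i : Fin (n + 1)) : csucc i = i + 1 :=
  Fin.ext (by simp [csucc, Fin.val_add])

theorem g_mul_self (hn : 0 < n) (i : Fin (n + 1)) :
    g q (n + 1) i * g q (n + 1) i = (q - 1) • g q (n + 1) i + algebraMap K _ q := by
  simpa [g] using RingQuot.mkAlgHom_rel K (ATLRel.quad (q := q) (m := n + 1) (by omega) i)

theorem g_commute (hn : 2 ≤ n) {i j : Fin (n + 1)} (hij : j ≠ i + 1) (hji : i ≠ j + 1) :
    Commute (g q (n + 1) i) (g q (n + 1) j) := by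
  rcases eq_or_ne i j with rfl | hne
  · rfl
  · rw [← csucc_eq_add_one] at hij hji
    simpa [g, commute_iff_eq] using RingQuot.mkAlgHom_rel K
      (ATLRel.comm (q := q) (m := n + 1) (by omega) i j hne hij hji)

theorem g_braid (hn : 2 ≤ n) (i : Fin (n + 1)) :
    g q (n + 1) i * g q (n + 1) (i + 1) * g q (n + 1) i =
      g q (n + 1) (i + 1) * g q (n + 1) i * g q (n + 1) (i + 1) := by
  simpa [g, csucc_eq_add_one] using
    RingQuot.mkAlgHom_rel K (ATLRel.braid (q := q) (m := n + 1) (by omega) i)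

theorem g_temperleyLieb (hn : 2 ≤ n) (i : Fin (n + 1)) :
    g q (n + 1) i * g q (n + 1) (i + 1) * g q (n + 1) i + g q (n + 1) i * g q (n + 1) (i + 1) +
      g q (n + 1) (i + 1) * g q (n + 1) i + g q (n + 1) i + g q (n + 1) (i + 1) + 1 = 0 := by
  simpa [g, csucc_eq_add_one] using
    RingQuot.mkAlgHom_rel K (ATLRel.vrel (q := q) (m := n + 1) (by omega) i)

/-- The monomial generators of `TLhat_{n+1}(q)`, shifted so that the letter `0` stands for
`1 + g_{a_{n+1}}` and the letter `i ≠ 0` for `1 + g_{σ_i}`. -/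
noncomputable def monomialGen (q : K) (n : ℕ) (i : Fin (n + 1)) : ATL K q (n + 1) :=
  1 + g q (n + 1) (i - 1)

theorem isCyclicTL_monomialGen (q : K) (hn : 2 ≤ n) :
    IsCyclicTL q (finRotate (n + 1)) (monomialGen q n) where
  mul_self i := one_add_mul_self (g_mul_self (by omega) _)
  mul_succ_mul i := by
    have h := g_temperleyLieb (q := q) hn (i - 1)
    rw [sub_add_cancel] at h
    rw [finRotate_apply, monomialGen, monomialGen, add_sub_cancel_right]
    exact one_add_mul_one_add_mul_one_add (g_mul_self (by omega) _) h
  succ_mul_mul i := by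
    have h := g_temperleyLieb (q := q) hn (i - 1)
    rw [g_braid hn, sub_add_cancel] at h
    rw [finRotate_apply, monomialGen, monomialGen, add_sub_cancel_right]
    exact one_add_mul_one_add_mul_one_add (g_mul_self (by omega) _) (by rw [← h]; abel)
  commute {i j} hij hji := by
    rw [finRotate_apply] at hij hji
    refine (Commute.one_left _).add_left ((Commute.one_right _).add_right (g_commute hn ?_ ?_))
    · rwa [sub_add_cancel, ne_eq, sub_eq_iff_eq_add]
    · rwa [sub_add_cancel, ne_eq, sub_eq_iff_eq_add]

theorem monomialGen_succ (i : Fin n) : monomialGen q n i.succ = 1 + g q (n + 1) i.castSucc := by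
  rw [monomialGen, ← Fin.coeSucc_eq_succ, add_sub_cancel_right]

theorem sub_one_add_one_eq_last (hn : 0 < n) :
    (⟨n - 1, by omega⟩ : Fin (n + 1)) + 1 = Fin.last n :=
  Fin.ext (by simp [← csucc_eq_add_one, csucc, Nat.sub_add_cancel hn])

theorem monomialGen_last (hn : 0 < n) :
    monomialGen q n (Fin.last n) = 1 + g q (n + 1) ⟨n - 1, by omega⟩ := by
  rw [monomialGen, ← sub_one_add_one_eq_last hn, add_sub_cancel_right]

theorem monomialGen_zero : monomialGen q n 0 = 1 + g q (n + 1) (Fin.last n) := by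
  rw [monomialGen, sub_eq_of_eq_add (Fin.last_add_one n).symm]

theorem adjoin_range_monomialGen : Algebra.adjoin K (Set.range (monomialGen q n)) = ⊤ := by
  rw [eq_top_iff, ← (AlgHom.range_eq_top _).2 (RingQuot.mkAlgHom_surjective K (ATLRel q (n + 1))),
    ← Algebra.map_top, ← FreeAlgebra.adjoin_range_ι, AlgHom.map_adjoin]
  refine Algebra.adjoin_le ?_
  rintro _ ⟨_, ⟨i, rfl⟩, rfl⟩
  have hgen := Algebra.subset_adjoin (R := K) (Set.mem_range_self (f := monomialGen q n) (i + 1))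
  have hg := sub_mem hgen (one_mem _)
  rwa [monomialGen, add_sub_cancel_left, add_sub_cancel_right] at hg

theorem bigG_eq_prod_monomialGen_sub_one :
    bigG q n = ((List.finRange (n + 1)).reverse.map fun i => monomialGen q n i - 1).prod := by
  have hrev : (fun j : Fin n => g q (n + 1) ⟨n - 1 - j.val, by omega⟩) =
      fun j => g q (n + 1) j.rev.castSucc :=
    funext fun j => congrArg _ (Fin.ext (by simp only [Fin.val_castSucc, Fin.val_rev]; omega))
  rw [bigG, hrev, List.finRange_succ, List.reverse_cons, List.map_append, List.prod_append,
    ← List.map_reverse, List.finRange_reverse, List.ofFn_eq_map]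
  simp [Function.comp_def, monomialGen_succ, monomialGen_zero]

end Generators

section Trace

variable {K M : Type*} [CommRing K] [AddCommGroup M] [Module K M] {q : Kˣ} {n : ℕ}

theorem vanishesOnMarkov_monomialGen (hn : 2 ≤ n) {F : ATL K (q : K) n →ₐ[K] ATL K (q : K) (n + 1)}
    (hF : isF (q : K) n hn F) {D : ATL K (q : K) (n + 1) →ₗ[K] M}
    (hD : ∀ x y, D (x * y) = D (y * x))
    (hMarkov : ∀ x, IsMarkov n (one_le_two.trans hn) F x → D x = 0) :
    VanishesOnMarkov q (monomialGen (q : K) n) F.range D where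
  isCyclicTL := isCyclicTL_monomialGen _ hn
  trace := hD
  mem {i} h0 hlast := by
    obtain ⟨j, rfl⟩ := Fin.exists_succ_eq.2 h0
    have hj : j.val < n - 1 := by
      have := Fin.val_lt_last hlast
      rw [Fin.val_succ] at this
      omega
    rw [monomialGen_succ]
    exact add_mem (one_mem _) ⟨_, hF.1 j hj⟩
  affineGen_mem := by
    have hsa := g_temperleyLieb (q := (q : K)) hn ⟨n - 1, by omega⟩
    rw [sub_one_add_one_eq_last (by omega)] at hsa
    rw [monomialGen_last (by omega), monomialGen_zero, affineGen_one_add_one_add hsa]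
    exact add_mem (one_mem _) ⟨_, hF.2⟩
  map_eq_zero {x} hx := hMarkov x ⟨x, 1, hx, one_mem _, Or.inl (mul_one x).symm⟩
  map_last_mul {x} hx := by
    rw [monomialGen_last (by omega), add_mul, one_mul, map_add,
      hMarkov x ⟨x, 1, hx, one_mem _, Or.inl (mul_one x).symm⟩,
      hMarkov _ ⟨1, x, one_mem _, hx, Or.inr (by rw [one_mul])⟩, add_zero]

end Trace

end AffineTL

open AffineTL in
theorem statement9_general {K M : Type*} [CommRing K] [AddCommGroup M] [Module K M]
    (q : K) (hq : IsUnit q) (n : ℕ) (hn : 2 ≤ n)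
    (F : ATL K q n →ₐ[K] ATL K q (n + 1)) (hF : isF q n hn F)
    (τ τ' : ATL K q (n + 1) →ₗ[K] M) (hτ : ∀ x y, τ (x * y) = τ (y * x))
    (hτ' : ∀ x y, τ' (x * y) = τ' (y * x))
    (hMarkov : ∀ m : ATL K q (n + 1), IsMarkov n (one_le_two.trans hn) F m → τ m = τ' m)
    (hG : ∀ k : ℕ, 2 ≤ k → τ ((bigG q n) ^ k) = τ' ((bigG q n) ^ k)) :
    τ = τ' := by
  obtain ⟨q, rfl⟩ := hq
  have h := vanishesOnMarkov_monomialGen (D := τ - τ') hn hF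
    (fun x y => by rw [LinearMap.sub_apply, LinearMap.sub_apply, hτ, hτ'])
    fun m hm => sub_eq_zero.2 (hMarkov m hm)
  have hG_sub (k : ℕ) (hk : 2 ≤ k) : (τ - τ') (bigG (q : K) n ^ k) = 0 := sub_eq_zero.2 (hG k hk)
  simp only [bigG_eq_prod_monomialGen_sub_one] at hG_sub
  exact sub_eq_zero.1 (h.eq_zero hn hG_sub adjoin_range_monomialGen)

open AffineTL in
/-- Lemma 5.1.4: a trace on `TLhat_{n+1}(q)` is determined by its values on
Markov elements together with its values on the powers `G^k`, `k ≥ 1`. -/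
theorem statement9 {K : Type*} [CommRing K] [IsDomain K] [CharZero K]
    (q sq : K) (hsq : sq * sq = q) (hq : IsUnit q) (hq1 : IsUnit (q + 1))
    (n : ℕ) (hn : 2 ≤ n)
    (F : ATL K q n →ₐ[K] ATL K q (n + 1)) (hF : isF q n hn F)
    (τ τ' : ATL K q (n + 1) →ₗ[K] K) (hτ : IsTrace τ) (hτ' : IsTrace τ')
    (hMarkov : ∀ m : ATL K q (n + 1), IsMarkov n (by omega) F m → τ m = τ' m)
    (hG : ∀ k : ℕ, 1 ≤ k → τ ((bigG q n) ^ k) = τ' ((bigG q n) ^ k)) :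
    τ = τ' :=
  statement9_general q hq n hn F hF τ τ' hτ hτ' hMarkov fun k hk => hG k (by omega)
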